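/- Any two elements of D^k(H) are Poisson equivalent, and δ_P is a metric on D^k(H): for all A, B, C ∈ D^k(H), δ_P(A,B) ≥ 0, δ_P(A,B) = δ_P(B,A), δ_P(A,B) = 0 if and only if A = B, and δ_P(A,C) ≤ δ_P(A,B) + δ_P(B,C). -/

import Mathlib

open ContinuousLinearMap

noncomputable section

/-- `ℓ²(ℕ^k; H)`. -/
abbrev L2 (k : ℕ) (H : Type*) [NormedAddCommGroup H] : Type _ :=
  lp (fun _ : Fin k → ℕ => H) 2

variable {k : ℕ} {H : Type*} [NormedAddCommGroup H] [InnerProductSpace ℂ H] [CompleteSpace H]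

/-- The Loewner (operator) order: `S ≤ T` iff `T - S` is a positive operator. -/
def opLE {E : Type*} [NormedAddCommGroup E] [InnerProductSpace ℂ E] [CompleteSpace E]
    (S T : E →L[ℂ] E) : Prop := (T - S).IsPositive

/-- The defect operator `Δ_X(I) = (id - Φ_{X_1}) ∘ ⋯ ∘ (id - Φ_{X_k})(I)`,
where `Φ_{X_i}(Y) = X_i Y X_i*`. -/
def defect (X : Fin k → (H →L[ℂ] H)) : H →L[ℂ] H :=
  ((List.ofFn fun i => fun Y : H →L[ℂ] H => Y - X i * Y * adjoint (X i)).foldr (· ∘ ·) id) 1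

/-- Membership in the regular polydisk `D^k(H)`: pairwise commuting operators of norm `< 1`
with positive invertible defect operator. -/
def memPolydisk (X : Fin k → (H →L[ℂ] H)) : Prop :=
  (∀ i j, Commute (X i) (X j)) ∧ (∀ i, ‖X i‖ < 1) ∧
    (defect X).IsPositive ∧ IsUnit (defect X)

/-- Membership in the closed regular polydisk `D^k(H)⁻`: pairwise commuting contractions `X`
with `rX ∈ D^k(H)` for all `r ∈ (0,1)`. -/
def memClosedPolydisk (X : Fin k → (H →L[ℂ] H)) : Prop :=
  (∀ i j, Commute (X i) (X j)) ∧ (∀ i, ‖X i‖ ≤ 1) ∧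
    ∀ r ∈ Set.Ioo (0 : ℝ) 1, memPolydisk (fun i => ((r : ℂ) • X i))

/-- `P` is the pluriharmonic Poisson kernel `𝒫(R, rX)` on `ℓ²(ℕ^k; H)`: it is characterized by
`⟨𝒫(R,rX)(δ_β h), δ_α ℓ⟩ = r^{Σ|α_i - β_i|} ⟨(∏ X_i^{(β_i-α_i)⁺})(∏ (X_i*)^{(α_i-β_i)⁺}) h, ℓ⟩`. -/
def IsPoissonKernel (X : Fin k → (H →L[ℂ] H)) (r : ℝ)
    (P : L2 k H →L[ℂ] L2 k H) : Prop :=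
  ∀ (α β : Fin k → ℕ) (h ℓ : H),
    inner (𝕜 := ℂ) (P (lp.single 2 β h)) (lp.single 2 α ℓ) =
      ((r ^ (∑ i, ((α i - β i) + (β i - α i))) : ℝ) : ℂ) *
        inner (𝕜 := ℂ)
          (((List.ofFn fun i => X i ^ (β i - α i)).prod *
            (List.ofFn fun i => (adjoint (X i)) ^ (α i - β i)).prod) h) ℓ

/-- The two-sided Harnack-type domination `c⁻² 𝒫(R,rB) ≤ 𝒫(R,rA) ≤ c² 𝒫(R,rB)` for all
`r ∈ [0,1)`, expressed in terms of the Poisson kernel families. -/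
def PoissonSandwich (PA PB : ℝ → (L2 k H →L[ℂ] L2 k H)) (c : ℝ) : Prop :=
  ∀ r ∈ Set.Ico (0 : ℝ) 1,
    opLE (((c : ℂ) ^ 2)⁻¹ • PB r) (PA r) ∧ opLE (PA r) (((c : ℂ) ^ 2) • PB r)

/-- Poisson equivalence of two points, expressed via their Poisson kernel families. -/
def PoissonEquiv (PA PB : ℝ → (L2 k H →L[ℂ] L2 k H)) : Prop :=
  ∃ c : ℝ, 1 ≤ c ∧ PoissonSandwich PA PB c

/-- The Poisson distance `δ_P`, expressed via the Poisson kernel families. -/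
def deltaP (PA PB : ℝ → (L2 k H →L[ℂ] L2 k H)) : ℝ :=
  Real.log (sInf {c : ℝ | 1 ≤ c ∧ PoissonSandwich PA PB c})

/-
Write `Y = rX` and let `W_i` be the weighted shift `δ_β h ↦ δ_(β + e_i) (Y_i* h)`. Conjugating the
kernel `P = 𝒫(R, rX)` successively by the operators `1 - W_i` (`T ↦ (1 - W_i)* T (1 - W_i)`)
telescopes it to the block diagonal operator `I ⊗ Δ_Y(I)`. If `d ≤ Δ_X(I)` with `d > 0`, then also
`d ≤ Δ_(rX)(I) ≤ 1` for every `r`, while `‖1 - W_i‖ ≤ 1 + ‖X_i‖` and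
`‖(1 - W_i)⁻¹‖ ≤ (1 - ‖X_i‖)⁻¹`. Hence `P` lies between two positive multiples of the identity that
do not depend on `r`, and any two kernel families dominate each other.

The admissible constants `c` form a closed set, so the infimum in `δ_P` is attained. The triangle
inequality follows by multiplying optimal constants. If `δ_P(A, B) = 0`, then `c = 1` is admissible
and the kernels coincide; the entry of `𝒫(R, rX)` at `(0, e_i)` being `r X_i`, so do the points.
-/

/-- The monomial `x₁ ^ n₁ ⋯ x_k ^ n_k`, with its factors in increasing order of the index. -/
def monomial {M : Type*} [Monoid M] {k : ℕ} (x : Fin k → M) (n : Fin k → ℕ) : M :=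
  (List.ofFn fun i => x i ^ n i).prod

theorem monomial_zero {M : Type*} [Monoid M] {k : ℕ} (x : Fin k → M) : monomial x 0 = 1 := by
  simp [monomial]

theorem monomial_add_single {M : Type*} [Monoid M] {k : ℕ} {x : Fin k → M}
    (hx : ∀ i j, Commute (x i) (x j)) (n : Fin k → ℕ) (i : Fin k) :
    monomial x (n + Pi.single i 1) = x i * monomial x n := by
  have split_off (m : Fin k → ℕ) : monomial x m =
      x i ^ m i * (((List.finRange k).erase i).map fun j => x j ^ m j).prod := by
    rw [monomial, List.ofFn_eq_map, ← List.prod_cons, ← List.map_cons (f := fun j => x j ^ m j)]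
    refine ((List.perm_cons_erase (List.mem_finRange i)).map _).prod_eq' ?_
    exact List.pairwise_map.2 <| List.pairwise_of_forall_sublist fun _ => (hx _ _).pow_pow _ _
  have off_diagonal : ∀ j ∈ (List.finRange k).erase i,
      x j ^ (n + Pi.single i 1 : Fin k → ℕ) j = x j ^ n j := fun j hj => by
    have hji : j ≠ i := ((List.nodup_finRange k).mem_erase_iff.1 hj).1
    simp [hji]
  rw [split_off n, split_off, List.map_congr_left off_diagonal, Pi.add_apply, Pi.single_eq_same,
    pow_succ', mul_assoc]

theorem monomial_smul {𝕜 R : Type*} [CommMonoid 𝕜] [Monoid R] [MulAction 𝕜 R]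
    [IsScalarTower 𝕜 R R] [SMulCommClass 𝕜 R R] {k : ℕ} (c : 𝕜) (x : Fin k → R) (n : Fin k → ℕ) :
    monomial (c • x) n = c ^ (∑ i, n i) • monomial x n := by
  simp only [monomial, Pi.smul_apply, smul_pow, List.ofFn_eq_map, Fin.sum_univ_def]
  induction List.finRange k with
  | nil => simp
  | cons i L ih =>
    simp only [List.map_cons, List.prod_cons, List.sum_cons, ih, smul_mul_smul_comm, pow_add]

/-- The map `Y ↦ (id - Φ_{x₁}) ∘ ⋯ ∘ (id - Φ_{x_n}) Y` with `Φ_x Y = x * Y * star x`, for a list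
`[x₁, …, x_n]`; the defect operator of a tuple is its value at `1`. -/
def defectMap {R : Type*} [Ring R] [Star R] (L : List R) (y : R) : R :=
  L.foldr (fun x z => z - x * z * star x) y

section DefectMap

variable {R : Type*} [Ring R] [StarRing R]

theorem defectMap_cons (x : R) (L : List R) (y : R) :
    defectMap (x :: L) y = defectMap L y - x * defectMap L y * star x := rfl

theorem defectMap_sub (L : List R) (y z : R) :
    defectMap L (y - z) = defectMap L y - defectMap L z := by
  induction L with
  | nil => rfl
  | cons x L ih =>
    simp only [defectMap_cons, ih]
    noncomm_ring

theorem defectMap_mul_mul_star {a b : R} {L : List R} (ha : ∀ x ∈ L, Commute x a)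
    (hb : ∀ x ∈ L, Commute x b) (y : R) :
    defectMap L (a * y * star b) = a * defectMap L y * star b := by
  induction L with
  | nil => rfl
  | cons x L ih =>
    rw [List.forall_mem_cons] at ha hb
    have hb' : star b * star x = star x * star b := hb.1.symm.star_star.eq
    rw [defectMap_cons, defectMap_cons, ih ha.2 hb.2]
    calc
      _ = a * defectMap L y * star b - x * a * defectMap L y * (star b * star x) := by
        simp only [mul_assoc]
      _ = _ := by rw [ha.1.eq, hb']; simp only [mul_assoc, mul_sub, sub_mul]

theorem defectMap_sub_conj {x : R} {L : List R} (hx : ∀ z ∈ L, Commute z x) (y : R) :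
    defectMap L (y - x * y * star x) = defectMap (x :: L) y := by
  rw [defectMap_sub, defectMap_mul_mul_star hx hx, defectMap_cons]

end DefectMap

section CStarAlgebra

theorem norm_one_le {A : Type*} [CStarAlgebra A] : ‖(1 : A)‖ ≤ 1 := by
  rcases subsingleton_or_nontrivial A
  · simp [Subsingleton.elim (1 : A) 0]
  · exact CStarRing.norm_one.le

theorem norm_inv_oneSub_le {A : Type*} [CStarAlgebra A] {t : A} {ρ : ℝ} (ht : ‖t‖ ≤ ρ)
    (hρ : ρ < 1) : ‖(↑(Units.oneSub t (ht.trans_lt hρ))⁻¹ : A)‖ ≤ (1 - ρ)⁻¹ :=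
  calc
    _ ≤ ‖(1 : A)‖ - 1 + (1 - ‖t‖)⁻¹ := tsum_geometric_le_of_norm_lt_one t (ht.trans_lt hρ)
    _ ≤ (1 - ‖t‖)⁻¹ := by linarith [norm_one_le (A := A)]
    _ ≤ (1 - ρ)⁻¹ := inv_anti₀ (by linarith) (by linarith)

variable {A : Type*} [CStarAlgebra A] [PartialOrder A] [StarOrderedRing A]

theorem exists_pos_smul_one_le {a : A} (ha : IsStrictlyPositive a) :
    ∃ d : ℝ, 0 < d ∧ d • 1 ≤ a := by
  rcases subsingleton_or_nontrivial A
  · exact ⟨1, one_pos, (Subsingleton.elim _ _).le⟩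
  · simp only [← Algebra.algebraMap_eq_smul_one]
    exact (CFC.exists_pos_algebraMap_le_iff ha.isSelfAdjoint).2 fun _ => ha.spectrum_pos

theorem nonneg_of_sub_conj_nonneg {x y : A} (hx : ‖x‖ < 1) (h : 0 ≤ y - x * y * star x) :
    0 ≤ y := by
  have partial_nonneg (n : ℕ) : 0 ≤ y - x ^ n * y * star (x ^ n) := by
    induction n with
    | zero => simp
    | succ n ih =>
      have telescope : y - x ^ (n + 1) * y * star (x ^ (n + 1)) =
          (y - x * y * star x) + x * (y - x ^ n * y * star (x ^ n)) * star x := by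
        rw [pow_succ', star_mul]
        noncomm_ring
      exact telescope ▸ add_nonneg h (star_right_conjugate_nonneg ih x)
  have pow_tendsto := tendsto_pow_atTop_nhds_zero_of_norm_lt_one hx
  have partial_tendsto : Filter.Tendsto (fun n : ℕ => y - x ^ n * y * star (x ^ n)) Filter.atTop
      (nhds (y - 0 * y * star 0)) :=
    tendsto_const_nhds.sub ((pow_tendsto.mul_const y).mul pow_tendsto.star)
  simpa using ge_of_tendsto' partial_tendsto partial_nonneg

theorem defectMap_le_defectMap_tail {x : A} {L : List A} {y : A} (hx : ‖x‖ < 1)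
    (h : 0 ≤ defectMap (x :: L) y) : defectMap (x :: L) y ≤ defectMap L y := by
  rw [defectMap_cons] at h ⊢
  exact sub_le_self _ (star_right_conjugate_nonneg (nonneg_of_sub_conj_nonneg hx h) x)

theorem defectMap_le_self {L : List A} {y : A} (hL : ∀ x ∈ L, ‖x‖ < 1) (h : 0 ≤ defectMap L y) :
    defectMap L y ≤ y := by
  induction L with
  | nil => exact le_rfl
  | cons x L ih =>
    rw [List.forall_mem_cons] at hL
    have step := defectMap_le_defectMap_tail hL.1 h
    exact step.trans (ih hL.2 (h.trans step))

-- For `G = defectMap (r L) y`, the next factor gives the convex combination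
-- `G - r² x G x* = (1 - r²) G + r² (G - x G x*)`, and both ends dominate `z` by induction.
theorem le_defectMap_smul {L : List A} (hcomm : L.Pairwise Commute) (hL : ∀ x ∈ L, ‖x‖ < 1)
    {r : ℝ} (hr : r ∈ Set.Icc 0 1) {z : A} (hz : 0 ≤ z) {y : A} (h : z ≤ defectMap L y) :
    z ≤ defectMap (L.map (r • ·)) y := by
  induction L generalizing y with
  | nil => exact h
  | cons x L ih =>
    rw [List.forall_mem_cons] at hL
    rw [List.pairwise_cons] at hcomm
    have hLx : ∀ w ∈ L, Commute w x := fun w hw => (hcomm.1 w hw).symm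
    have hrLx : ∀ w ∈ L.map (r • ·), Commute w x := by
      simpa only [List.forall_mem_map] using fun w hw => (hLx w hw).smul_left r
    have lower := ih hcomm.2 hL.2 (h.trans (defectMap_le_defectMap_tail hL.1 (hz.trans h)))
    have lower_sub := ih hcomm.2 hL.2 (h.trans_eq (defectMap_sub_conj hLx y).symm)
    rw [defectMap_sub_conj hrLx, defectMap_cons] at lower_sub
    have hr2 : r ^ 2 ≤ 1 := pow_le_one₀ hr.1 hr.2
    have combination := convex_Ici (𝕜 := ℝ) z lower lower_sub (sub_nonneg.2 hr2) (sq_nonneg r)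
      (sub_add_cancel 1 (r ^ 2))
    refine combination.trans_eq ?_
    rw [List.map_cons, defectMap_cons, star_smul]
    simp only [smul_mul_assoc, mul_smul_comm, star_trivial, smul_sub, sub_smul, one_smul, smul_smul,
      pow_two]
    abel

theorem star_mul_mul_mem_Icc_of_unit (u : Aˣ) {p : A} {a b m M : ℝ} (ha : 0 < a)
    (hua : ‖(u : A)‖ ≤ a) (hub : ‖(↑u⁻¹ : A)‖ ≤ b) (hm : 0 ≤ m) (hM : 0 ≤ M)
    (h : star (u : A) * p * u ∈ Set.Icc (m • 1) (M • 1)) :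
    p ∈ Set.Icc ((m / a ^ 2) • 1) ((M * b ^ 2) • 1) := by
  have star_mul_self_le {x : A} {c : ℝ} (hx : ‖x‖ ≤ c) : star x * x ≤ (c ^ 2) • (1 : A) := by
    rw [← Algebra.algebraMap_eq_smul_one]
    exact CStarAlgebra.star_mul_le_algebraMap_norm_sq.trans
      (algebraMap_mono A (pow_le_pow_left₀ (norm_nonneg x) hx 2))
  set w : A := ↑u⁻¹
  have conj_cancel (q : A) : star w * (star (u : A) * q * u) * w = q := by
    have huw : (u : A) * w = 1 := u.mul_inv
    calc
      _ = star ((u : A) * w) * q * (u * w) := by simp only [star_mul, mul_assoc]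
      _ = q := by simp [huw]
  have conj_smul_one (c : ℝ) : star w * (c • 1) * w = c • (star w * w) := by simp
  have one_le : (1 : A) ≤ (a ^ 2) • (star w * w) := by
    have := star_left_conjugate_le_conjugate (star_mul_self_le hua) w
    rwa [conj_smul_one, ← mul_one (star (u : A)), conj_cancel] at this
  constructor
  · calc
      (m / a ^ 2) • (1 : A) ≤ (m / a ^ 2) • (a ^ 2) • (star w * w) := by gcongr
      _ = star w * (m • 1) * w := by
        rw [smul_smul, div_mul_cancel₀ _ (by positivity), conj_smul_one]
      _ ≤ p := (star_left_conjugate_le_conjugate h.1 w).trans_eq (conj_cancel p)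
  · calc
      p ≤ star w * (M • 1) * w :=
        (conj_cancel p).symm.trans_le (star_left_conjugate_le_conjugate h.2 w)
      _ = M • (star w * w) := conj_smul_one M
      _ ≤ M • (b ^ 2) • 1 := by gcongr; exact star_mul_self_le hub
      _ = (M * b ^ 2) • 1 := smul_smul ..

theorem mem_Icc_of_foldr_conj_one_sub {ι : Type*} {s : ι → A} {ρ : ι → ℝ} (hs : ∀ i, ‖s i‖ ≤ ρ i)
    (hρ : ∀ i, ρ i < 1) (L : List ι) {p : A} {m M : ℝ} (hm : 0 ≤ m) (hM : 0 ≤ M)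
    (h : L.foldr (fun i t => star (1 - s i) * t * (1 - s i)) p ∈ Set.Icc (m • 1) (M • 1)) :
    p ∈ Set.Icc ((m / (L.map fun i => 1 + ρ i).prod ^ 2) • 1)
      ((M / (L.map fun i => 1 - ρ i).prod ^ 2) • 1) := by
  induction L generalizing m M with
  | nil => simpa using h
  | cons i L ih =>
    have hρi : 0 ≤ ρ i := (norm_nonneg _).trans (hs i)
    have norm_le : ‖(Units.oneSub (s i) ((hs i).trans_lt (hρ i)) : A)‖ ≤ 1 + ρ i :=
      norm_sub_le_of_le norm_one_le (hs i)
    have tail := star_mul_mul_mem_Icc_of_unit _ (by positivity) norm_le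
      (norm_inv_oneSub_le (hs i) (hρ i)) hm hM h
    have := ih (by positivity) (by positivity) tail
    rw [List.map_cons, List.prod_cons, List.map_cons, List.prod_cons, mul_pow, mul_pow, ← div_div,
      ← div_div]
    rwa [inv_pow, ← div_eq_mul_inv] at this

end CStarAlgebra

/-- The recursion in direction `i` obeyed by the matrix coefficients of a Poisson kernel with
coefficient `x`: they depend on `α i` and `β i` through `β i - α i` only, and moving away from the
diagonal multiplies them by `x` on the left or by `star x` on the right. -/
structure IsPoissonAlong {ι R : Type*} [DecidableEq ι] [Mul R] [Star R] (x : R) (i : ι)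
    (K : (ι → ℕ) → (ι → ℕ) → R) : Prop where
  shift (α β : ι → ℕ) : K (α + Pi.single i 1) (β + Pi.single i 1) = K α β
  right (α β : ι → ℕ) : α i ≤ β i → K α (β + Pi.single i 1) = x * K α β
  left (α β : ι → ℕ) : β i ≤ α i → K (α + Pi.single i 1) β = K α β * star x

/-- The kernel obtained from `K` by applying the defect map in the directions `L`: it is supported
where `α` and `β` agree on `L`. -/
def partialDefect {ι R : Type*} [Ring R] [Star R] (X : ι → R) (K : (ι → ℕ) → (ι → ℕ) → R)
    (L : List ι) (α β : ι → ℕ) : R :=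
  if ∀ j ∈ L, α j = β j then defectMap (L.map X) (K α β) else 0

section Kernels

variable {ι R : Type*}

theorem exists_eq_add_single [DecidableEq ι] {α β : ι → ℕ} {i : ι} (h : α i < β i) :
    ∃ γ : ι → ℕ, β = γ + Pi.single i 1 ∧ α i ≤ γ i := by
  have single_le : Pi.single i 1 ≤ β := fun j => by
    rcases eq_or_ne j i with rfl | hj
    · simpa using Nat.one_le_of_lt h
    · simp [hj]
  refine ⟨β - Pi.single i 1, (tsub_add_cancel_of_le single_le).symm, ?_⟩
  simpa using Nat.le_sub_one_of_lt h

variable [Ring R] [StarRing R]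

theorem partialDefect_nil (X : ι → R) (K : (ι → ℕ) → (ι → ℕ) → R) : partialDefect X K [] = K := by
  ext α β
  simp [partialDefect, defectMap]

theorem partialDefect_cons (X : ι → R) (K : (ι → ℕ) → (ι → ℕ) → R) (i : ι) (L : List ι)
    (α β : ι → ℕ) :
    partialDefect X K (i :: L) α β =
      if α i = β i then partialDefect X K L α β - X i * partialDefect X K L α β * star (X i)
      else 0 := by
  simp only [partialDefect, List.forall_mem_cons, List.map_cons, defectMap_cons]
  split_ifs <;> simp_all

variable [DecidableEq ι] {x : R} {i : ι} {K : (ι → ℕ) → (ι → ℕ) → R}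

namespace IsPoissonAlong

theorem second_difference (hK : IsPoissonAlong x i K) (α β : ι → ℕ) :
    K α β - x * K (α + Pi.single i 1) β -
        (K α (β + Pi.single i 1) - x * K (α + Pi.single i 1) (β + Pi.single i 1)) * star x =
      if α i = β i then K α β - x * K α β * star x else 0 := by
  rw [hK.shift]
  split_ifs with h
  · rw [hK.right α β h.le, hK.left α β h.ge, sub_self, zero_mul, sub_zero, mul_assoc]
  rcases lt_or_gt_of_ne h with h | h
  · obtain ⟨γ, rfl, hγ⟩ := exists_eq_add_single h
    rw [hK.right _ _ h.le, hK.shift, hK.right _ _ hγ]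
    noncomm_ring
  · obtain ⟨γ, rfl, hγ⟩ := exists_eq_add_single h
    rw [hK.left _ _ h.le, hK.shift, hK.left _ _ hγ]
    noncomm_ring

theorem partialDefect (hK : IsPoissonAlong x i K) {X : ι → R} {L : List ι} (hi : i ∉ L)
    (hx : ∀ j ∈ L, Commute (X j) x) : IsPoissonAlong x i (partialDefect X K L) := by
  have agree_off {α β : ι → ℕ} :
      (∀ j ∈ L, (α + Pi.single i 1 : ι → ℕ) j = β j) ↔ ∀ j ∈ L, α j = β j :=
    forall₂_congr fun j hj => by simp [ne_of_mem_of_not_mem hj hi]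
  have agree_off' {α β : ι → ℕ} :
      (∀ j ∈ L, α j = (β + Pi.single i 1 : ι → ℕ) j) ↔ ∀ j ∈ L, α j = β j :=
    forall₂_congr fun j hj => by simp [ne_of_mem_of_not_mem hj hi]
  have commute_map : ∀ z ∈ L.map X, Commute z x := by simpa only [List.forall_mem_map] using hx
  have commute_one : ∀ z ∈ L.map X, Commute z 1 := fun z _ => Commute.one_right z
  have map_mul_left (y : R) : defectMap (L.map X) (x * y) = x * defectMap (L.map X) y := by
    simpa using defectMap_mul_mul_star commute_map commute_one y
  have map_mul_star (y : R) :
      defectMap (L.map X) (y * star x) = defectMap (L.map X) y * star x := by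
    simpa using defectMap_mul_mul_star commute_one commute_map y
  refine ⟨fun α β => ?_, fun α β h => ?_, fun α β h => ?_⟩ <;>
    simp only [_root_.partialDefect, agree_off, agree_off']
  · rw [hK.shift]
  · rw [hK.right α β h, map_mul_left, mul_ite, mul_zero]
  · rw [hK.left α β h, map_mul_star, ite_mul, zero_mul]

end IsPoissonAlong

end Kernels

/-- The matrix coefficients `X ^ (β - α)⁺ * (X*) ^ (α - β)⁺` of the Poisson kernel of `X`. -/
def poissonSymbol {R : Type*} [Monoid R] [Star R] {k : ℕ} (X : Fin k → R) (α β : Fin k → ℕ) : R :=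
  monomial X (β - α) * monomial (star X) (α - β)

section PoissonSymbol

variable {R : Type*} {k : ℕ}

theorem poissonSymbol_self [Monoid R] [Star R] (X : Fin k → R) (α : Fin k → ℕ) :
    poissonSymbol X α α = 1 := by
  simp only [poissonSymbol, tsub_self, monomial_zero, mul_one]

theorem add_single_tsub {α β : Fin k → ℕ} {i : Fin k} (h : α i ≤ β i) :
    β + Pi.single i 1 - α = β - α + Pi.single i 1 ∧ α - (β + Pi.single i 1) = α - β := by
  constructor <;> ext j <;> rcases eq_or_ne j i with rfl | hj <;> simp [*] <;> omega

theorem isPoissonAlong_poissonSymbol [Monoid R] [StarMul R] {X : Fin k → R}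
    (hX : ∀ i j, Commute (X i) (X j)) (i : Fin k) : IsPoissonAlong (X i) i (poissonSymbol X) where
  shift α β := by simp only [poissonSymbol, add_tsub_add_eq_tsub_right]
  right α β h := by
    rw [poissonSymbol, (add_single_tsub h).1, (add_single_tsub h).2, monomial_add_single hX,
      mul_assoc, ← poissonSymbol]
  left α β h := by
    have star_commute (i j : Fin k) : Commute (star X i) (star X j) := (hX i j).star_star
    have star_mul_monomial (n : Fin k → ℕ) :
        star X i * monomial (star X) n = monomial (star X) n * star X i :=
      (Commute.list_prod_right _ _ (by
        simpa only [List.forall_mem_ofFn_iff] using fun j => (star_commute i j).pow_right _)).eq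
    rw [poissonSymbol, (add_single_tsub h).1, (add_single_tsub h).2,
      monomial_add_single star_commute, star_mul_monomial, ← mul_assoc, ← poissonSymbol,
      Pi.star_apply]

theorem poissonSymbol_zero_single [Monoid R] [StarMul R] {X : Fin k → R}
    (hX : ∀ i j, Commute (X i) (X j)) (i : Fin k) : poissonSymbol X 0 (Pi.single i 1) = X i := by
  simpa [poissonSymbol_self] using (isPoissonAlong_poissonSymbol hX i).right 0 0 le_rfl

end PoissonSymbol

/-- The Hilbert space `ℓ²(κ; E)`. -/
abbrev HilbertSum (κ E : Type*) [NormedAddCommGroup E] : Type _ :=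
  lp (fun _ : κ => E) 2

section BlockOperators

variable {κ E : Type*} [NormedAddCommGroup E] [InnerProductSpace ℂ E]

section Blocks

variable [DecidableEq κ]

/-- The matrix coefficient at `(α, β)` of an operator on `ℓ²(κ; E)`. -/
def blockEntry (T : HilbertSum κ E →L[ℂ] HilbertSum κ E) (α β : κ) : E →L[ℂ] E :=
  lp.evalCLM ℂ (fun _ : κ => E) 2 α ∘L T ∘L lp.singleContinuousLinearMap ℂ (fun _ : κ => E) 2 β

theorem blockEntry_apply (T : HilbertSum κ E →L[ℂ] HilbertSum κ E) (α β : κ) (h : E) :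
    blockEntry T α β h = T (lp.single 2 β h) α := rfl

theorem blockEntry_ext {S T : HilbertSum κ E →L[ℂ] HilbertSum κ E}
    (h : ∀ α β, blockEntry S α β = blockEntry T α β) : S = T := by
  refine lp.ext_continuousLinearMap (by norm_num) fun β => ?_
  ext v α
  exact congr($(h α β) v)

theorem inner_blockEntry (T : HilbertSum κ E →L[ℂ] HilbertSum κ E) (α β : κ) (v w : E) :
    inner ℂ v (blockEntry T α β w) = inner ℂ (lp.single 2 α v) (T (lp.single 2 β w)) :=
  (lp.inner_single_left α v (T (lp.single 2 β w))).symm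

theorem blockEntry_star [CompleteSpace E] (T : HilbertSum κ E →L[ℂ] HilbertSum κ E) (α β : κ) :
    blockEntry (star T) α β = star (blockEntry T β α) := by
  ext v
  refine ext_inner_left ℂ fun w => ?_
  rw [star_eq_adjoint, star_eq_adjoint, adjoint_inner_right, inner_blockEntry, adjoint_inner_right,
    ← inner_conj_symm, ← inner_blockEntry, inner_conj_symm]

variable (E) in
/-- The inclusion of `E` into `ℓ²(κ; E)` as the coordinate `α`. -/
def singleIsometry (α : κ) : E →ₗᵢ[ℂ] HilbertSum κ E where
  toLinearMap := (lp.singleContinuousLinearMap ℂ (fun _ : κ => E) 2 α).toLinearMap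
  norm_map' v := by exact lp.norm_single (by norm_num) _ _

variable (κ E) in
theorem orthogonalFamily_singleIsometry :
    OrthogonalFamily ℂ (fun _ : κ => E) (singleIsometry E) := by
  intro α β hαβ v w
  change inner ℂ (lp.single 2 α v : HilbertSum κ E) (lp.single 2 β w) = 0
  rw [lp.inner_single_left, lp.single_apply_ne _ _ _ hαβ, inner_zero_right]

end Blocks

variable [CompleteSpace E]

variable (κ E) in
/-- The value of `ampliation κ E` at `D` is the operator `I ⊗ D` on `ℓ²(κ; E)`, acting by `D` on
every coordinate. -/
def ampliation : (E →L[ℂ] E) →⋆ₐ[ℂ] (HilbertSum κ E →L[ℂ] HilbertSum κ E) where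
  toFun D := lp.mapCLM 2 (fun _ => D) (norm_nonneg D) fun _ => le_rfl
  map_one' := rfl
  map_mul' _ _ := rfl
  map_zero' := rfl
  map_add' _ _ := rfl
  commutes' _ := rfl
  map_star' D := by
    refine (eq_adjoint_iff _ _).2 fun f g => ?_
    rw [lp.inner_eq_tsum, lp.inner_eq_tsum]
    exact tsum_congr fun α => adjoint_inner_left D (g α) (f α)

theorem ampliation_apply (D : E →L[ℂ] E) (f : HilbertSum κ E) (α : κ) :
    ampliation κ E D f α = D (f α) := rfl

theorem norm_ampliation_le (D : E →L[ℂ] E) : ‖ampliation κ E D‖ ≤ ‖D‖ :=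
  lp.norm_mapCLM_le 2 _ (norm_nonneg D) fun _ => le_rfl

theorem ampliation_single [DecidableEq κ] (D : E →L[ℂ] E) (α : κ) (v : E) :
    ampliation κ E D (lp.single 2 α v) = lp.single 2 α (D v) := by
  ext β
  rcases eq_or_ne β α with rfl | h
  · simp [ampliation_apply]
  · simp [ampliation_apply, h]

theorem blockEntry_ampliation [DecidableEq κ] (D : E →L[ℂ] E) (α β : κ) :
    blockEntry (ampliation κ E D) α β = if α = β then D else 0 := by
  ext v
  rw [blockEntry_apply, ampliation_single, lp.single_apply]
  split_ifs with h
  · subst h; simp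
  · simp [h]

section WeightedShift

variable [DecidableEq κ] [Add κ] [IsRightCancelAdd κ] (e : κ) (D : E →L[ℂ] E)

/-- The weighted shift `δ_β v ↦ δ_(β + e) (D v)` on `ℓ²(κ; E)`. -/
def weightedShift : HilbertSum κ E →L[ℂ] HilbertSum κ E :=
  ((orthogonalFamily_singleIsometry κ E).comp
    (add_left_injective e)).linearIsometry.toContinuousLinearMap * ampliation κ E D

theorem weightedShift_single (β : κ) (v : E) :
    weightedShift e D (lp.single 2 β v) = lp.single 2 (β + e) (D v) := by
  rw [weightedShift, mul_apply_eq_comp, ampliation_single]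
  exact OrthogonalFamily.linearIsometry_apply_single
    ((orthogonalFamily_singleIsometry κ E).comp (add_left_injective e)) (D v)

theorem norm_weightedShift_le : ‖weightedShift e D‖ ≤ ‖D‖ := by
  rw [← one_mul ‖D‖]
  exact norm_mul_le_of_le (LinearIsometry.norm_toContinuousLinearMap_le _) (norm_ampliation_le D)

theorem blockEntry_mul_one_sub_weightedShift (T : HilbertSum κ E →L[ℂ] HilbertSum κ E) (α β : κ) :
    blockEntry (T * (1 - weightedShift e D)) α β =
      blockEntry T α β - blockEntry T α (β + e) * D := by
  ext v
  simp [blockEntry_apply, weightedShift_single]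

theorem blockEntry_star_one_sub_weightedShift_mul (T : HilbertSum κ E →L[ℂ] HilbertSum κ E)
    (α β : κ) :
    blockEntry (star (1 - weightedShift e D) * T) α β =
      blockEntry T α β - star D * blockEntry T (α + e) β := by
  rw [← star_star T, ← star_mul, blockEntry_star, blockEntry_mul_one_sub_weightedShift, star_sub,
    star_mul, ← blockEntry_star, ← blockEntry_star]

end WeightedShift

end BlockOperators

section PoissonKernels

variable {E : Type*} [NormedAddCommGroup E] [InnerProductSpace ℂ E] [CompleteSpace E]

theorem blockEntry_foldr_conj_one_sub_weightedShift {ι : Type*} [Fintype ι] [DecidableEq ι]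
    {X : ι → (E →L[ℂ] E)} (hX : ∀ i j, Commute (X i) (X j))
    {T : HilbertSum (ι → ℕ) E →L[ℂ] HilbertSum (ι → ℕ) E}
    (hT : ∀ i, IsPoissonAlong (X i) i (blockEntry T)) {L : List ι} (hL : L.Nodup) :
    blockEntry (L.foldr (fun i S => star (1 - weightedShift (Pi.single i 1) (star (X i))) * S *
        (1 - weightedShift (Pi.single i 1) (star (X i)))) T) =
      partialDefect X (blockEntry T) L := by
  induction L with
  | nil => exact (partialDefect_nil X _).symm
  | cons i L ih =>
    rw [List.nodup_cons] at hL
    ext1 α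
    ext1 β
    rw [List.foldr_cons, blockEntry_mul_one_sub_weightedShift,
      blockEntry_star_one_sub_weightedShift_mul, blockEntry_star_one_sub_weightedShift_mul,
      ih hL.2, star_star, ((hT i).partialDefect hL.1 fun j _ => hX j i).second_difference,
      partialDefect_cons]

theorem defect_eq_defectMap (X : Fin k → (E →L[ℂ] E)) :
    defect X = defectMap ((List.finRange k).map X) 1 := by
  rw [defect, List.ofFn_eq_map]
  induction List.finRange k with
  | nil => rfl
  | cons i L ih => exact congr($ih - X i * $ih * star (X i))

theorem foldr_conj_one_sub_weightedShift_eq_ampliation {X : Fin k → (E →L[ℂ] E)}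
    (hX : ∀ i j, Commute (X i) (X j)) {P : L2 k E →L[ℂ] L2 k E}
    (hP : blockEntry P = poissonSymbol X) :
    (List.finRange k).foldr (fun i S => star (1 - weightedShift (Pi.single i 1) (star (X i))) * S *
        (1 - weightedShift (Pi.single i 1) (star (X i)))) P =
      ampliation (Fin k → ℕ) E (defect X) := by
  refine blockEntry_ext fun α β => ?_
  rw [blockEntry_foldr_conj_one_sub_weightedShift hX
      (fun i => hP ▸ isPoissonAlong_poissonSymbol hX i) (List.nodup_finRange k),
    hP, blockEntry_ampliation, partialDefect, defect_eq_defectMap]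
  refine ite_congr (by simp [funext_iff]) (fun h => ?_) fun _ => rfl
  rw [h, poissonSymbol_self]

theorem mem_Icc_of_blockEntry_eq_poissonSymbol {X : Fin k → (E →L[ℂ] E)}
    (hX : ∀ i j, Commute (X i) (X j)) {ρ : Fin k → ℝ} (hXρ : ∀ i, ‖X i‖ ≤ ρ i) (hρ : ∀ i, ρ i < 1)
    {m M : ℝ} (hm : 0 ≤ m) (hM : 0 ≤ M) (hdefect : defect X ∈ Set.Icc (m • 1) (M • 1))
    {P : L2 k E →L[ℂ] L2 k E} (hP : blockEntry P = poissonSymbol X) :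
    P ∈ Set.Icc ((m / (∏ i, (1 + ρ i)) ^ 2) • 1) ((M / (∏ i, (1 - ρ i)) ^ 2) • 1) := by
  have ampliation_mono : Monotone (ampliation (Fin k → ℕ) E) := OrderHomClass.mono _
  have norm_le (i : Fin k) :
      ‖weightedShift (Pi.single i 1 : Fin k → ℕ) (star (X i))‖ ≤ ρ i :=
    (norm_weightedShift_le _ _).trans ((norm_star (X i)).trans_le (hXρ i))
  rw [Fin.prod_univ_def, Fin.prod_univ_def]
  refine mem_Icc_of_foldr_conj_one_sub norm_le hρ (List.finRange k) hm hM ?_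
  rw [foldr_conj_one_sub_weightedShift_eq_ampliation hX hP]
  exact ⟨ampliation_mono hdefect.1, ampliation_mono hdefect.2⟩

theorem poissonSymbol_smul (r : ℝ) (X : Fin k → (E →L[ℂ] E)) (α β : Fin k → ℕ) :
    poissonSymbol (r • X) α β =
      r ^ (∑ i, ((α i - β i) + (β i - α i))) • poissonSymbol X α β := by
  rw [poissonSymbol, star_smul, star_trivial, monomial_smul, monomial_smul, smul_mul_smul_comm,
    ← pow_add, ← Finset.sum_add_distrib, poissonSymbol]
  simp only [Pi.sub_apply, add_comm]

theorem isPoissonKernel_iff {X : Fin k → (E →L[ℂ] E)} {r : ℝ} {P : L2 k E →L[ℂ] L2 k E} :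
    IsPoissonKernel X r P ↔ blockEntry P = poissonSymbol (r • X) := by
  have coefficient (α β : Fin k → ℕ) (h l : E) :
      ((r ^ (∑ i, ((α i - β i) + (β i - α i))) : ℝ) : ℂ) * inner ℂ (poissonSymbol X α β h) l =
        inner ℂ (poissonSymbol (r • X) α β h) l := by
    rw [poissonSymbol_smul, smul_apply, inner_smul_left_eq_smul, Complex.real_smul]
  have entry (α β : Fin k → ℕ) (h l : E) :
      inner ℂ (P (lp.single 2 β h)) (lp.single 2 α l) = inner ℂ (blockEntry P α β h) l :=
    lp.inner_single_right α l (P (lp.single 2 β h))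
  constructor
  · intro hP
    ext α β h
    refine ext_inner_right ℂ fun l => ?_
    rw [← entry, ← coefficient]
    exact hP α β h l
  · intro hP α β h l
    rw [entry, hP, ← coefficient]
    rfl

theorem IsPoissonKernel.unique {X : Fin k → (E →L[ℂ] E)} {r : ℝ} {P Q : L2 k E →L[ℂ] L2 k E}
    (hP : IsPoissonKernel X r P) (hQ : IsPoissonKernel X r Q) : P = Q := by
  rw [isPoissonKernel_iff] at hP hQ
  exact blockEntry_ext fun α β => by rw [hP, hQ]

theorem IsPoissonKernel.injective {X Y : Fin k → (E →L[ℂ] E)} (hX : ∀ i j, Commute (X i) (X j))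
    (hY : ∀ i j, Commute (Y i) (Y j)) {r : ℝ} (hr : r ≠ 0) {P : L2 k E →L[ℂ] L2 k E}
    (hPX : IsPoissonKernel X r P) (hPY : IsPoissonKernel Y r P) : X = Y := by
  rw [isPoissonKernel_iff] at hPX hPY
  have smul_commute {Z : Fin k → (E →L[ℂ] E)} (hZ : ∀ i j, Commute (Z i) (Z j)) (i j : Fin k) :
      Commute ((r • Z) i) ((r • Z) j) := ((hZ i j).smul_left r).smul_right r
  refine smul_right_injective _ hr (funext fun i => ?_)
  change (r • X) i = (r • Y) i
  rw [← poissonSymbol_zero_single (smul_commute hX), ← hPX, hPY,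
    poissonSymbol_zero_single (smul_commute hY)]

theorem defect_smul_mem_Icc {X : Fin k → (E →L[ℂ] E)} (hcomm : ∀ i j, Commute (X i) (X j))
    (hnorm : ∀ i, ‖X i‖ < 1) {D : E →L[ℂ] E} (hD : 0 ≤ D) (hDX : D ≤ defect X) {r : ℝ}
    (hr : r ∈ Set.Icc 0 1) : defect (r • X) ∈ Set.Icc D 1 := by
  have map_smul : (List.finRange k).map (r • X) = ((List.finRange k).map X).map (r • ·) := by
    rw [List.map_map]
    rfl
  have pairwise : ((List.finRange k).map X).Pairwise Commute :=
    List.pairwise_map.2 <| List.pairwise_of_forall_sublist fun _ => hcomm _ _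
  have norm_lt : ∀ Y ∈ (List.finRange k).map X, ‖Y‖ < 1 :=
    List.forall_mem_map.2 fun i _ => hnorm i
  have smul_norm_lt : ∀ Y ∈ ((List.finRange k).map X).map (r • ·), ‖Y‖ < 1 :=
    List.forall_mem_map.2 fun Y hY => by
      rw [norm_smul, Real.norm_of_nonneg hr.1]
      exact mul_lt_one_of_nonneg_of_lt_one_right hr.2 (norm_nonneg Y) (norm_lt Y hY)
  rw [defect_eq_defectMap] at hDX ⊢
  rw [map_smul]
  have lower := le_defectMap_smul pairwise norm_lt hr hD hDX
  exact ⟨lower, defectMap_le_self smul_norm_lt (hD.trans lower)⟩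

theorem memPolydisk.exists_forall_isPoissonKernel_mem_Icc {X : Fin k → (E →L[ℂ] E)}
    (hX : memPolydisk X) :
    ∃ m M : ℝ, 0 < m ∧ ∀ r ∈ Set.Ico (0 : ℝ) 1, ∀ P : L2 k E →L[ℂ] L2 k E,
      IsPoissonKernel X r P → P ∈ Set.Icc (m • 1) (M • 1) := by
  obtain ⟨hcomm, hnorm, hpos, hunit⟩ := hX
  obtain ⟨d, hd, d_le⟩ := exists_pos_smul_one_le
    (hunit.isStrictlyPositive ((nonneg_iff_isPositive _).2 hpos))
  have one_add_pos (i : Fin k) : 0 < 1 + ‖X i‖ := by positivity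
  refine ⟨d / (∏ i, (1 + ‖X i‖)) ^ 2, 1 / (∏ i, (1 - ‖X i‖)) ^ 2,
    div_pos hd (pow_pos (Finset.prod_pos fun i _ => one_add_pos i) 2),
    fun r hr P hP => ?_⟩
  have smul_comm (i j : Fin k) : Commute ((r • X) i) ((r • X) j) :=
    ((hcomm i j).smul_left r).smul_right r
  have smul_norm_le (i : Fin k) : ‖(r • X) i‖ ≤ ‖X i‖ := by
    rw [Pi.smul_apply, norm_smul, Real.norm_of_nonneg hr.1]
    exact mul_le_of_le_one_left (norm_nonneg _) hr.2.le
  have defect_mem : defect (r • X) ∈ Set.Icc (d • 1) ((1 : ℝ) • 1) := by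
    rw [one_smul]
    exact defect_smul_mem_Icc hcomm hnorm (smul_nonneg hd.le zero_le_one) d_le ⟨hr.1, hr.2.le⟩
  exact mem_Icc_of_blockEntry_eq_poissonSymbol smul_comm smul_norm_le hnorm hd.le zero_le_one
    defect_mem (isPoissonKernel_iff.1 hP)

end PoissonKernels

/-- Harnack domination with constant `c`: each of `x` and `y` is at most `c ^ 2` times the other.
The constant enters squared, as in the definition of the Poisson distance. -/
def HarnackBound {A : Type*} [LE A] [SMul ℝ A] (c : ℝ) (x y : A) : Prop :=
  x ≤ c ^ 2 • y ∧ y ≤ c ^ 2 • x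

theorem HarnackBound.symm {A : Type*} [LE A] [SMul ℝ A] {c : ℝ} {x y : A}
    (h : HarnackBound c x y) : HarnackBound c y x := And.symm h

theorem harnackBound_one_iff {A : Type*} [PartialOrder A] [MulAction ℝ A] {x y : A} :
    HarnackBound 1 x y ↔ x = y := by
  rw [HarnackBound, one_pow, one_smul, one_smul, ← le_antisymm_iff]

section HarnackBound

variable {A : Type*} [CStarAlgebra A] [PartialOrder A] [StarOrderedRing A] {x y z : A} {c d : ℝ}

theorem inv_sq_smul_le_and_le_sq_smul_iff (hc : 0 < c) :
    (c ^ 2)⁻¹ • y ≤ x ∧ x ≤ c ^ 2 • y ↔ HarnackBound c x y := by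
  rw [and_comm, HarnackBound, inv_smul_le_iff_of_pos (pow_pos hc 2)]

theorem HarnackBound.trans (hxy : HarnackBound c x y) (hyz : HarnackBound d y z) :
    HarnackBound (c * d) x z := by
  constructor
  · calc
      x ≤ c ^ 2 • y := hxy.1
      _ ≤ c ^ 2 • d ^ 2 • z := smul_le_smul_of_nonneg_left hyz.1 (sq_nonneg c)
      _ = (c * d) ^ 2 • z := by rw [smul_smul, mul_pow]
  · calc
      z ≤ d ^ 2 • y := hyz.2
      _ ≤ d ^ 2 • c ^ 2 • x := smul_le_smul_of_nonneg_left hxy.2 (sq_nonneg d)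
      _ = (c * d) ^ 2 • x := by rw [smul_smul, mul_pow, mul_comm]

theorem isClosed_setOf_harnackBound (x y : A) : IsClosed {c : ℝ | HarnackBound c x y} := by
  have smul_continuous (w : A) : Continuous fun c : ℝ => c ^ 2 • w := by fun_prop
  exact (isClosed_le continuous_const (smul_continuous y)).inter
    (isClosed_le continuous_const (smul_continuous x))

theorem le_sq_smul {m M : ℝ} (hm : 0 < m) (hc : 1 ≤ c) (hMc : M / m ≤ c) (hx : x ≤ M • 1)
    (hy : m • 1 ≤ y) : x ≤ c ^ 2 • y := by
  have M_le : M ≤ c ^ 2 * m := (div_le_iff₀ hm).1 (hMc.trans (le_self_pow₀ hc two_ne_zero))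
  calc
    x ≤ M • 1 := hx
    _ ≤ (c ^ 2 * m) • 1 := smul_le_smul_of_nonneg_right M_le zero_le_one
    _ = c ^ 2 • m • 1 := mul_smul ..
    _ ≤ c ^ 2 • y := smul_le_smul_of_nonneg_left hy (sq_nonneg c)

theorem HarnackBound.of_mem_Icc {m₁ M₁ m₂ M₂ : ℝ} (hm₁ : 0 < m₁) (hm₂ : 0 < m₂)
    (hx : x ∈ Set.Icc (m₁ • 1) (M₁ • 1)) (hy : y ∈ Set.Icc (m₂ • 1) (M₂ • 1)) :
    HarnackBound (max 1 (max (M₁ / m₂) (M₂ / m₁))) x y :=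
  ⟨le_sq_smul hm₂ (le_max_left ..) ((le_max_left ..).trans (le_max_right ..)) hx.2 hy.1,
    le_sq_smul hm₁ (le_max_left ..) ((le_max_right ..).trans (le_max_right ..)) hy.2 hx.1⟩

theorem opLE_and_opLE_iff_harnackBound {F : Type*} [NormedAddCommGroup F] [InnerProductSpace ℂ F]
    [CompleteSpace F] (hc : 0 < c) {S T : F →L[ℂ] F} :
    opLE (((c : ℂ) ^ 2)⁻¹ • T) S ∧ opLE S ((c : ℂ) ^ 2 • T) ↔ HarnackBound c S T := by
  rw [← inv_sq_smul_le_and_le_sq_smul_iff hc]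
  simp only [RCLike.real_smul_eq_coe_smul (K := ℂ)]
  push_cast
  rfl

end HarnackBound

section PoissonMetric

variable {E : Type*} [NormedAddCommGroup E] [InnerProductSpace ℂ E] [CompleteSpace E]
  {PA PB PC : ℝ → (L2 k E →L[ℂ] L2 k E)} {c d : ℝ}

theorem poissonSandwich_iff (hc : 0 < c) :
    PoissonSandwich PA PB c ↔ ∀ r ∈ Set.Ico (0 : ℝ) 1, HarnackBound c (PA r) (PB r) :=
  forall₂_congr fun _ _ => opLE_and_opLE_iff_harnackBound hc

theorem PoissonSandwich.symm (hc : 0 < c) (h : PoissonSandwich PA PB c) :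
    PoissonSandwich PB PA c := by
  rw [poissonSandwich_iff hc] at h ⊢
  exact fun r hr => (h r hr).symm

theorem PoissonSandwich.trans (hc : 0 < c) (hd : 0 < d) (hAB : PoissonSandwich PA PB c)
    (hBC : PoissonSandwich PB PC d) : PoissonSandwich PA PC (c * d) := by
  rw [poissonSandwich_iff hc] at hAB
  rw [poissonSandwich_iff hd] at hBC
  exact (poissonSandwich_iff (mul_pos hc hd)).2 fun r hr => (hAB r hr).trans (hBC r hr)

theorem poissonSandwich_one_iff :
    PoissonSandwich PA PB 1 ↔ Set.EqOn PA PB (Set.Ico 0 1) :=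
  (poissonSandwich_iff one_pos).trans (forall₂_congr fun _ _ => harnackBound_one_iff)

theorem isClosed_setOf_poissonSandwich (PA PB : ℝ → (L2 k E →L[ℂ] L2 k E)) :
    IsClosed {c : ℝ | 1 ≤ c ∧ PoissonSandwich PA PB c} := by
  have eq_inter : {c : ℝ | 1 ≤ c ∧ PoissonSandwich PA PB c} =
      Set.Ici 1 ∩ ⋂ r ∈ Set.Ico (0 : ℝ) 1, {c | HarnackBound c (PA r) (PB r)} := by
    ext c
    simp only [Set.mem_inter_iff, Set.mem_iInter₂]
    exact and_congr_right fun hc => poissonSandwich_iff (one_pos.trans_le hc)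
  rw [eq_inter]
  exact isClosed_Ici.inter <| isClosed_biInter fun r _ => isClosed_setOf_harnackBound _ _

theorem PoissonEquiv.exp_deltaP_mem (h : PoissonEquiv PA PB) :
    Real.exp (deltaP PA PB) ∈ {c : ℝ | 1 ≤ c ∧ PoissonSandwich PA PB c} := by
  have sInf_mem := (isClosed_setOf_poissonSandwich PA PB).csInf_mem h ⟨1, fun _ hc => hc.1⟩
  rwa [deltaP, Real.exp_log (one_pos.trans_le sInf_mem.1)]

theorem PoissonEquiv.deltaP_nonneg (h : PoissonEquiv PA PB) : 0 ≤ deltaP PA PB :=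
  Real.one_le_exp_iff.1 h.exp_deltaP_mem.1

theorem PoissonSandwich.deltaP_le_log (hc : 1 ≤ c) (h : PoissonSandwich PA PB c) :
    deltaP PA PB ≤ Real.log c := by
  have one_le_sInf : 1 ≤ sInf {c : ℝ | 1 ≤ c ∧ PoissonSandwich PA PB c} :=
    le_csInf ⟨c, hc, h⟩ fun _ hc => hc.1
  exact Real.log_le_log (one_pos.trans_le one_le_sInf) (csInf_le ⟨1, fun _ hc => hc.1⟩ ⟨hc, h⟩)

theorem deltaP_comm (PA PB : ℝ → (L2 k E →L[ℂ] L2 k E)) : deltaP PA PB = deltaP PB PA := by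
  have set_eq : {c : ℝ | 1 ≤ c ∧ PoissonSandwich PA PB c} =
      {c : ℝ | 1 ≤ c ∧ PoissonSandwich PB PA c} :=
    Set.ext fun _ => and_congr_right fun hc =>
      ⟨.symm (one_pos.trans_le hc), .symm (one_pos.trans_le hc)⟩
  rw [deltaP, set_eq, deltaP]

theorem deltaP_triangle (hAB : PoissonEquiv PA PB) (hBC : PoissonEquiv PB PC) :
    deltaP PA PC ≤ deltaP PA PB + deltaP PB PC := by
  rw [← Real.log_exp (deltaP PA PB + deltaP PB PC), Real.exp_add]
  have ⟨one_le_AB, sandwich_AB⟩ := hAB.exp_deltaP_mem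
  have ⟨one_le_BC, sandwich_BC⟩ := hBC.exp_deltaP_mem
  exact (sandwich_AB.trans (Real.exp_pos _) (Real.exp_pos _) sandwich_BC).deltaP_le_log
    (one_le_mul_of_one_le_of_one_le one_le_AB one_le_BC)

theorem PoissonEquiv.deltaP_eq_zero_iff (h : PoissonEquiv PA PB) :
    deltaP PA PB = 0 ↔ Set.EqOn PA PB (Set.Ico 0 1) := by
  constructor
  · intro h0
    have mem := h.exp_deltaP_mem
    rw [h0, Real.exp_zero] at mem
    exact poissonSandwich_one_iff.1 mem.2
  · intro heq
    exact le_antisymm (((poissonSandwich_one_iff.2 heq).deltaP_le_log le_rfl).trans_eq Real.log_one)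
      h.deltaP_nonneg

theorem poissonEquiv_of_memPolydisk {A B : Fin k → (E →L[ℂ] E)} (hA : memPolydisk A)
    (hB : memPolydisk B) (hPA : ∀ r ∈ Set.Ico (0 : ℝ) 1, IsPoissonKernel A r (PA r))
    (hPB : ∀ r ∈ Set.Ico (0 : ℝ) 1, IsPoissonKernel B r (PB r)) : PoissonEquiv PA PB := by
  obtain ⟨m₁, M₁, hm₁, boundA⟩ := hA.exists_forall_isPoissonKernel_mem_Icc
  obtain ⟨m₂, M₂, hm₂, boundB⟩ := hB.exists_forall_isPoissonKernel_mem_Icc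
  have one_le : 1 ≤ max 1 (max (M₁ / m₂) (M₂ / m₁)) := le_max_left ..
  exact ⟨_, one_le, (poissonSandwich_iff (one_pos.trans_le one_le)).2 fun r hr =>
    .of_mem_Icc hm₁ hm₂ (boundA r hr _ (hPA r hr)) (boundB r hr _ (hPB r hr))⟩

theorem eqOn_poissonKernel_iff {A B : Fin k → (E →L[ℂ] E)} (hA : ∀ i j, Commute (A i) (A j))
    (hB : ∀ i j, Commute (B i) (B j))
    (hPA : ∀ r ∈ Set.Ico (0 : ℝ) 1, IsPoissonKernel A r (PA r))
    (hPB : ∀ r ∈ Set.Ico (0 : ℝ) 1, IsPoissonKernel B r (PB r)) :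
    Set.EqOn PA PB (Set.Ico 0 1) ↔ A = B := by
  constructor
  · intro h
    have half_mem : (1 / 2 : ℝ) ∈ Set.Ico (0 : ℝ) 1 := by norm_num
    exact (hPA _ half_mem).injective hA hB (by norm_num) (h half_mem ▸ hPB _ half_mem)
  · rintro rfl r hr
    exact (hPA r hr).unique (hPB r hr)

end PoissonMetric

/-- Any two elements of `D^k(H)` are Poisson equivalent, and `δ_P` is a metric
on `D^k(H)`: it is nonnegative, symmetric, vanishes exactly on the diagonal, and satisfies
the triangle inequality.  (All notions are expressed via the Poisson kernel families, which
determine the points.) -/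
theorem stmt_15 (hk : 1 ≤ k) :
    (∀ (A B : Fin k → (H →L[ℂ] H)) (PA PB : ℝ → (L2 k H →L[ℂ] L2 k H)),
      memPolydisk A → memPolydisk B →
      (∀ r ∈ Set.Ico (0 : ℝ) 1, IsPoissonKernel A r (PA r)) →
      (∀ r ∈ Set.Ico (0 : ℝ) 1, IsPoissonKernel B r (PB r)) →
      PoissonEquiv PA PB ∧ 0 ≤ deltaP PA PB ∧ deltaP PA PB = deltaP PB PA ∧
        (deltaP PA PB = 0 ↔ A = B)) ∧
    (∀ (A B C : Fin k → (H →L[ℂ] H)) (PA PB PC : ℝ → (L2 k H →L[ℂ] L2 k H)),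
      memPolydisk A → memPolydisk B → memPolydisk C →
      (∀ r ∈ Set.Ico (0 : ℝ) 1, IsPoissonKernel A r (PA r)) →
      (∀ r ∈ Set.Ico (0 : ℝ) 1, IsPoissonKernel B r (PB r)) →
      (∀ r ∈ Set.Ico (0 : ℝ) 1, IsPoissonKernel C r (PC r)) →
      deltaP PA PC ≤ deltaP PA PB + deltaP PB PC) := by
  constructor
  · intro A B PA PB hA hB hPA hPB
    have equiv := poissonEquiv_of_memPolydisk hA hB hPA hPB
    exact ⟨equiv, equiv.deltaP_nonneg, deltaP_comm PA PB,
      equiv.deltaP_eq_zero_iff.trans (eqOn_poissonKernel_iff hA.1 hB.1 hPA hPB)⟩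
  · intro A B C PA PB PC hA hB hC hPA hPB hPC
    exact deltaP_triangle (poissonEquiv_of_memPolydisk hA hB hPA hPB)
      (poissonEquiv_of_memPolydisk hB hC hPB hPC)

end
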